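/- Divided powers of X_n^− on the dual Schur basis: for all r ≥ 1, n, m ∈ ℤ, i ∈ {0,1} and every partition μ = (μ₁,…,μ_l), the following holds in W_i: X_n^{−(r)} (s_{μ'} e^{mα}e^{iα/2}) = (−1)^{r(n+1+i)} q^{r(r−1)/2} · ∑_λ q^{2|λ|} · s_{λ'} · s_{(ν(λ), μ)'} · e^{(m−r)α}e^{iα/2}, where the sum is over all partitions λ = (λ₁,…,λ_r) with at most r parts (all but finitely many terms are zero), ν(λ) := (−λ_k − 2(r−k) − (n+1−2m−i))_{k=1,…,r}, and (ν(λ), μ) ∈ ℤ^{r+l} is the juxtaposed tuple. -/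

import Mathlib

/-!
Write `e_c` for the elementary symmetric functions (`e_c = 0` for `c < 0`) and let
`B_k = ∑_j (-1)^j e_{k+j} h_j^⊥` (`bern`), where `h_j^⊥ P` is the coefficient of `u^j` in the
translate of `P` under `p_n ↦ p_n + u^n` (`transl`, `DopF_hhF`). Four facts carry the argument.

* Since `exp(-∑ (1+q^{2n}) p_n zⁿ/n) = E(-q²z) E(-z)`, the current `X_n^-` acts on the summand of
  charge `m` as `(-1)^K ∑_b q^{2b} e_b B_{K-b}` with `K = 2m + i - n - 1` (`Xm_single`, `curr_eq`).
* `B_k s_{ρ'} = s_{(k,ρ)'}` for every integer tuple `ρ` (`bern_schurEF`).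
* `B_k e_c = e_c B_k - e_{c-1} B_{k+1}` as operators (`bern_eZF_mul`).
* `s_{(η_1, η_2 + 1, …, η_r + r - 1, μ)'}` is alternating in `η` (`altSchur_perm`).

Let `θ_{K}(β) = ∑_c q^{2|c|} ∏_a e_{c_a} · s_{(K - c_a + β_a + a)_a, μ}'` (`theta`), which is
alternating in `β`. Moving `B_{K-b}` past the factors `e_{c_a}` expresses the next application of
`X^-` to `θ_{K+2}(β)` as a sum over subsets `S` of `{0, …, r-1}` of terms
`(-q²)^{|S|} θ_K(|S|, β + 1 - 1_S)` (`theta_step`). For the staircase `β = (0, 1, …, r-1)` two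
exponents coincide unless `S` is an initial segment of some length `s`, and then the new exponent
is a cyclic rearrangement, of sign `(-1)^s`, of the longer staircase. Each application thus
multiplies by `1 + q² + ⋯ + q^{2r}` (`theta_rho_step`), and the product of these factors is
`q^{r(r-1)/2} [r]!` (`qprod_eq`).

Finally, alternation kills every `c` for which `c - ρ` has a repeated entry, and each remaining `c`
with nonnegative entries is `σ(λ - ρ) + ρ` for a unique partition `λ` and permutation `σ`; the sum
over `σ` is the determinant `s_{λ'}` (`theta_rho`).
-/

open MvPolynomial

noncomputable section

/-- The base field `F = ℚ(q)`. -/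
abbrev Fq : Type := RatFunc ℚ

/-- The indeterminate `q ∈ ℚ(q)`. -/
def qq : Fq := RatFunc.X

/-- `Λ_F = F[p₁,p₂,…]`, with the variable `X n` (for `n : ℕ+`) the power sum `p_n`. -/
abbrev LamF : Type := MvPolynomial ℕ+ Fq

/-- The power sum `p_n`. -/
def ppF (n : ℕ+) : LamF := X n

/-- The family `g` with generating function `∑_k g_k t^k = exp (∑_{n≥1} c n · p_n tⁿ/n)`,
characterized by `g 0 = 1` and the recursion obtained by differentiating:
`(k+1) · g (k+1) = ∑_{i=0}^{k} c (i+1) · p_{i+1} · g (k−i)`. -/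
def genFamF (c : ℕ → Fq) : ℕ → LamF
  | 0 => 1
  | (k+1) => (((k : Fq) + 1)⁻¹) •
      ∑ i ∈ Finset.range (k+1), c (i+1) • (ppF ⟨i+1, Nat.succ_pos i⟩ * genFamF c (k - i))
  decreasing_by exact Nat.lt_succ_of_le (Nat.sub_le k i)

/-- The complete homogeneous symmetric function `h_k`. -/
def hhF : ℕ → LamF := genFamF fun _ => 1

/-- The elementary symmetric function `e_k`. -/
def eeF : ℕ → LamF := genFamF fun n => (-1)^(n+1)

/-- `h` indexed by `ℤ` (zero in negative degrees). -/
def hZF (n : ℤ) : LamF := if 0 ≤ n then hhF n.toNat else 0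

/-- `e` indexed by `ℤ` (zero in negative degrees). -/
def eZF (n : ℤ) : LamF := if 0 ≤ n then eeF n.toNat else 0

/-- The creation coefficients of `X⁺(z)`:
`exp (∑ ((1+q^{2n})q^{−n}/n)·p_n·zⁿ) = ∑_k HpF k · z^k`. -/
def HpF : ℕ → LamF := genFamF fun n => (1 + qq ^ (2*n)) * (qq⁻¹) ^ n

/-- `HpF` indexed by `ℤ`. -/
def HZp (n : ℤ) : LamF := if 0 ≤ n then HpF n.toNat else 0

/-- The annihilation avatars for `X⁺(z)`: since
`(1+q^{2n})q^{−n}/n · a_n = q^{−n}·∂/∂p_n`, the coefficient of `z^{−j}` in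
`exp (−∑ ((1+q^{2n})q^{−n}/n)·a_n·z^{−n})` is `ApF j` with `p_i ↦ i·∂/∂p_i`
substituted, where `∑_k ApF k t^k = exp (−∑ q^{−n} p_n tⁿ/n)`. -/
def ApF : ℕ → LamF := genFamF fun n => -((qq⁻¹) ^ n)

/-- The creation coefficients of `X⁻(z)`:
`exp (−∑ ((1+q^{2n})/n)·p_n·zⁿ) = ∑_k HmF k · z^k`. -/
def HmF : ℕ → LamF := genFamF fun n => -(1 + qq ^ (2*n))

/-- `HmF` indexed by `ℤ`. -/
def HZm (n : ℤ) : LamF := if 0 ≤ n then HmF n.toNat else 0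

/-- The differential operator `∏_i (i·∂/∂p_i)^(α i)`. -/
def monOpF (α : ℕ+ →₀ ℕ) : Module.End Fq LamF :=
  ((α.support.sort (· ≤ ·)).map fun (i : ℕ+) =>
    (((i : ℕ) : Fq) • (pderiv i).toLinearMap) ^ (α i)).prod

/-- `f(∂) P`: substitute `p_i ↦ i·∂/∂p_i` in `f` and apply to `P`. -/
def DopF (f : LamF) (P : LamF) : LamF := ∑ α ∈ f.support, f.coeff α • monOpF α P

/-- Bound for the weighted degree of `P` (weight of `p_i` is `i`). -/
def wboundF (P : LamF) : ℕ := P.support.sup fun α => α.sum fun i k => (i : ℕ) * k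

/-- The level-one Fock space `W_i = Λ_F ⊗ F[ℤα]e^{iα/2}`, realized as `ℤ →₀ Λ_F`;
`Finsupp.single m P` represents `P·e^{mα}e^{iα/2}`. -/
abbrev W : Type := ℤ →₀ LamF

/-- The Drinfeld current component `X_n^+` on `W_i` (the parameter `i ∈ {0,1}` enters
through `z^∂ e^{mα}e^{iα/2} = z^{2m+i} e^{mα}e^{iα/2}`): the coefficient of `z^{−n−1}` in
`X⁺(z) = exp(∑((1+q^{2n})q^{−n}/n)a_{−n}zⁿ)·exp(−∑((1+q^{2n})q^{−n}/n)a_n z^{−n})·e^α z^∂`,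
i.e. `X_n^+(P·e^{mα}) = ∑_j HpF_{j−n−1−2m−i} · (ApF j)(∂) P · e^{(m+1)α}`
(only the finitely many `j ≤ wboundF P` contribute). -/
def Xp (i n : ℤ) (w : W) : W :=
  w.sum fun m P => Finsupp.single (m+1)
    (∑ j ∈ Finset.range (wboundF P + 1),
      HZp ((j : ℤ) - n - 1 - 2*m - i) * DopF (ApF j) P)

/-- The Drinfeld current component `X_n^-` on `W_i`: the coefficient of `z^{−n−1}` in
`X⁻(z) = exp(−∑((1+q^{2n})/n)a_{−n}zⁿ)·exp(∑((1+q^{2n})/n)a_n z^{−n})·e^{−α} z^{−∂}`,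
i.e. `X_n^-(P·e^{mα}) = ∑_j HmF_{j+2m+i−n−1} · h_j(∂) P · e^{(m−1)α}`
(here `(1+q^{2n})/n · a_n = ∂/∂p_n`, whose generating family is `h`). -/
def Xm (i n : ℤ) (w : W) : W :=
  w.sum fun m P => Finsupp.single (m-1)
    (∑ j ∈ Finset.range (wboundF P + 1),
      HZm ((j : ℤ) + 2*m + i - n - 1) * DopF (hhF j) P)

/-- The `q`-factorial `[r]! = ∏_{k=1}^r (q^k − q^{−k})/(q − q^{−1})`. -/
def qfact (r : ℕ) : Fq := ∏ k ∈ Finset.range r, (qq ^ (k+1) - (qq⁻¹) ^ (k+1)) / (qq - qq⁻¹)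

/-- The divided power `x^{(r)} = x^r / [r]!` of an operator on `W`. -/
def divpow (f : W → W) (r : ℕ) (w : W) : W := (qfact r)⁻¹ • (f^[r] w)

/-- Schur function of an integer tuple: `s_ρ = det (h_{ρ_i − i + j})`. -/
def schurF {l : ℕ} (ρ : Fin l → ℤ) : LamF :=
  (Matrix.of fun i j : Fin l => hZF (ρ i - (i.1 : ℤ) + (j.1 : ℤ))).det

/-- Dual Schur function of an integer tuple: `s_{ρ'} = det (e_{ρ_i − i + j})`. -/
def schurEF {l : ℕ} (ρ : Fin l → ℤ) : LamF :=
  (Matrix.of fun i j : Fin l => eZF (ρ i - (i.1 : ℤ) + (j.1 : ℤ))).det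

/-- `q^{±∂}`: `q^{ε∂}(P·e^{mα}e^{iα/2}) = q^{ε(2m+i)}·P·e^{mα}e^{iα/2}`. -/
def qd (i ε : ℤ) (w : W) : W := w.sum fun m P => Finsupp.single m (qq ^ (ε * (2*m + i)) • P)

/-- The Chevalley generator `e₁ = X₀⁺`. -/
def che1 (i : ℤ) : W → W := Xp i 0
/-- The Chevalley generator `f₁ = X₀⁻`. -/
def chf1 (i : ℤ) : W → W := Xm i 0
/-- The Chevalley generator `e₀ = X₁⁻ ∘ q^{−∂}`. -/
def che0 (i : ℤ) (w : W) : W := Xm i 1 (qd i (-1) w)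
/-- The Chevalley generator `f₀ = q^∂ ∘ X₋₁⁺`. -/
def chf0 (i : ℤ) (w : W) : W := qd i 1 (Xp i (-1) w)

/-! ### Generating series -/

/-- Power series solutions of `y' = x y` are determined by their constant term. -/
lemma ode_unique {A : Type*} [CommRing A] [IsDomain A] [CharZero A] {x y y' : PowerSeries A}
    (h : PowerSeries.derivative A y = x * y) (h' : PowerSeries.derivative A y' = x * y')
    (h0 : PowerSeries.coeff 0 y = PowerSeries.coeff 0 y') : y = y' := by
  ext k
  induction k using Nat.strong_induction_on with
  | _ k ih =>
    cases k with
    | zero => exact h0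
    | succ k =>
      have e1 := congrArg (PowerSeries.coeff k) h
      have e2 := congrArg (PowerSeries.coeff k) h'
      rw [PowerSeries.coeff_derivative, PowerSeries.coeff_mul] at e1 e2
      have hk : ((k : A) + 1) ≠ 0 := by exact_mod_cast Nat.succ_ne_zero k
      apply mul_right_cancel₀ hk
      rw [e1, e2]
      refine Finset.sum_congr rfl fun p hp => ?_
      rw [ih p.2 (Nat.lt_succ_of_le (by have := Finset.HasAntidiagonal.mem_antidiagonal.mp hp; omega))]

lemma derivative_mul_ps {A : Type*} [CommRing A] (f g : PowerSeries A) :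
    PowerSeries.derivative A (f * g) =
      f * PowerSeries.derivative A g + g * PowerSeries.derivative A f := by
  rw [Derivation.leibniz, smul_eq_mul, smul_eq_mul]

lemma derivative_one_add_CX {A : Type*} [CommRing A] (a : A) :
    PowerSeries.derivative A (1 + PowerSeries.C a * PowerSeries.X) = PowerSeries.C a := by
  rw [map_add, derivative_mul_ps]; simp

/-- The generating series `∑_k g_k t^k` of the family `genFamF c`. -/
def genSer (c : ℕ → Fq) : PowerSeries LamF := PowerSeries.mk (genFamF c)

/-- The logarithmic derivative `∑_{i ≥ 0} c_{i+1} p_{i+1} t^i` of `genSer c`. -/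
def logDer (c : ℕ → Fq) : PowerSeries LamF :=
  PowerSeries.mk fun i => c (i+1) • ppF (Nat.succPNat i)

lemma genFamF_succ (c : ℕ → Fq) (k : ℕ) :
    genFamF c (k+1) * ((k : LamF) + 1) =
      ∑ i ∈ Finset.range (k+1), c (i+1) • (ppF (Nat.succPNat i) * genFamF c (k - i)) := by
  have hk : ((k : Fq) + 1) ≠ 0 := by exact_mod_cast Nat.succ_ne_zero k
  rw [genFamF]
  have : ((k : LamF) + 1) = MvPolynomial.C ((k : Fq) + 1) := by simp
  rw [this, mul_comm, ← MvPolynomial.smul_eq_C_mul, smul_smul, mul_inv_cancel₀ hk, one_smul]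
  rfl

lemma derivative_genSer (c : ℕ → Fq) :
    PowerSeries.derivative LamF (genSer c) = logDer c * genSer c := by
  ext1 k
  rw [PowerSeries.coeff_derivative, PowerSeries.coeff_mul,
    Finset.Nat.sum_antidiagonal_eq_sum_range_succ
      (fun a b => PowerSeries.coeff a (logDer c) * PowerSeries.coeff b (genSer c))]
  simp only [genSer, logDer, PowerSeries.coeff_mk]
  rw [genFamF_succ]
  simp

lemma coeff_zero_genSer (c : ℕ → Fq) : PowerSeries.coeff 0 (genSer c) = 1 := by
  simp [genSer, genFamF]

lemma genSer_add (c d : ℕ → Fq) : genSer (fun n => c n + d n) = genSer c * genSer d := by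
  apply ode_unique (derivative_genSer _)
  · rw [Derivation.leibniz, derivative_genSer, derivative_genSer, smul_eq_mul, smul_eq_mul]
    have : logDer (fun n => c n + d n) = logDer c + logDer d := by
      ext1 k; simp [logDer, add_smul]
    rw [this]; ring
  · rw [PowerSeries.coeff_mul]; simp [coeff_zero_genSer]

lemma genFamF_scale (c : ℕ → Fq) (x : Fq) (k : ℕ) :
    genFamF (fun n => x ^ n * c n) k = x ^ k • genFamF c k := by
  induction k using Nat.strong_induction_on with
  | _ k ih =>
    cases k with
    | zero => simp [genFamF]
    | succ k =>
      rw [genFamF, genFamF, smul_comm (x ^ (k+1)), Finset.smul_sum (r := x ^ (k+1))]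
      congr 1
      refine Finset.sum_congr rfl fun i hi => ?_
      have hik : i ≤ k := Nat.lt_succ_iff.mp (Finset.mem_range.mp hi)
      rw [ih (k - i) (by omega), mul_smul_comm, smul_smul, smul_smul]
      congr 1
      rw [show k + 1 = (i + 1) + (k - i) by omega, pow_add x (i+1)]
      ring

/-- The creation coefficients of `X⁻(z)`, from `exp(-∑ (1+q^{2n}) p_n zⁿ/n) = E(-z) E(-q² z)`. -/
lemma HmF_eq (k : ℕ) : HmF k = (-1 : Fq) ^ k •
    ∑ p ∈ Finset.HasAntidiagonal.antidiagonal k, (qq ^ 2) ^ p.1 • (eeF p.1 * eeF p.2) := by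
  have hc : (fun n : ℕ => -(1 + qq ^ (2*n))) = fun n =>
      ((-qq^2) ^ n * (-1) ^ (n+1)) + ((-1) ^ n * (-1) ^ (n+1)) := by
    funext n
    have h1 : (-qq^2) ^ n * (-1 : Fq) ^ (n+1) = - qq ^ (2*n) := by
      rw [neg_pow, pow_succ, pow_mul]
      have : ((-1 : Fq) ^ n) * (-1) ^ n = 1 := by rw [← mul_pow]; simp
      linear_combination (-(qq^2)^n) * this
    have h2 : (-1 : Fq) ^ n * (-1 : Fq) ^ (n+1) = - 1 := by
      have : ((-1 : Fq) ^ n) * (-1) ^ n = 1 := by rw [← mul_pow]; simp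
      rw [pow_succ]; linear_combination -this
    rw [h1, h2]; ring
  have h := congrArg (PowerSeries.coeff k)
    (genSer_add (fun n => (-qq^2) ^ n * (-1) ^ (n+1)) (fun n => (-1) ^ n * (-1) ^ (n+1)))
  rw [← hc, PowerSeries.coeff_mul] at h
  simp only [genSer, PowerSeries.coeff_mk, genFamF_scale] at h
  rw [HmF, h, Finset.smul_sum]
  refine Finset.sum_congr rfl fun p hp => ?_
  rw [eeF, smul_mul_smul_comm, smul_smul]
  congr 1
  rw [← Finset.HasAntidiagonal.mem_antidiagonal.mp hp, neg_pow, pow_add]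
  ring

/-! ### Translation of the power sums -/

/-- Translation `p_n ↦ p_n + u^n`; the coefficient of `u^j` in `transl P` is `h_j^⊥ P`. -/
def transl : LamF →ₐ[Fq] Polynomial LamF :=
  MvPolynomial.aeval fun n : ℕ+ => Polynomial.C (ppF n) + Polynomial.X ^ (n : ℕ)

lemma transl_ppF (n : ℕ+) : transl (ppF n) = Polynomial.C (ppF n) + Polynomial.X ^ (n : ℕ) := by
  simp [transl, ppF]

/-- Writing `T` for `transl` and `E(t) = ∑ e_k t^k`: `T E(t) = E(t) (1 + u t)`,
since `∑ (-1)^{n-1} uⁿ tⁿ/n = log (1 + u t)`. -/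
lemma transl_eeF_succ (k : ℕ) : transl (eeF (k+1)) =
    Polynomial.C (eeF (k+1)) + Polynomial.X * Polynomial.C (eeF k) := by
  set c : ℕ → Fq := fun n => (-1)^(n+1) with hc
  set geo : PowerSeries (Polynomial LamF) :=
    PowerSeries.mk fun i => (-1) ^ i * Polynomial.X ^ (i+1) with hgeo
  have hlog : PowerSeries.map (transl : LamF →+* Polynomial LamF) (logDer c) =
      PowerSeries.map Polynomial.C (logDer c) + geo := by
    ext1 i
    have h1 : transl (logDer c |> PowerSeries.coeff i) =
        Polynomial.C (logDer c |> PowerSeries.coeff i) + (-1) ^ i * Polynomial.X ^ (i+1) := by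
      simp only [logDer, PowerSeries.coeff_mk, map_smul, transl_ppF, hc, smul_add]
      congr 1
      · rw [Polynomial.smul_C]
      · rw [Algebra.smul_def, map_pow, map_neg, map_one, Nat.succPNat_coe, Nat.succ_eq_add_one]
        ring
    simpa [hgeo] using h1
  have hmapd : ∀ (φ : LamF →+* Polynomial LamF) (f : PowerSeries LamF),
      PowerSeries.derivative _ (PowerSeries.map φ f) =
        PowerSeries.map φ (PowerSeries.derivative _ f) := by
    intro φ f; ext1 k; simp [PowerSeries.coeff_derivative]
  have hgeo2 : geo * (1 + PowerSeries.C (Polynomial.X : Polynomial LamF) * PowerSeries.X) =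
      PowerSeries.C Polynomial.X := by
    ext1 i
    rw [mul_add, ← mul_assoc, mul_one, map_add]
    cases i with
    | zero => simp [hgeo]
    | succ i =>
      rw [PowerSeries.coeff_succ_mul_X, mul_comm geo, PowerSeries.coeff_C_mul,
        PowerSeries.coeff_C]
      simp only [hgeo, PowerSeries.coeff_mk]
      rw [if_neg (by omega)]
      ring
  have key : PowerSeries.map (transl : LamF →+* Polynomial LamF) (genSer c) =
      PowerSeries.map Polynomial.C (genSer c) *
        (1 + PowerSeries.C Polynomial.X * PowerSeries.X) := by
    apply ode_unique (x := PowerSeries.map (transl : LamF →+* Polynomial LamF) (logDer c))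
    · rw [hmapd, derivative_genSer, map_mul]
    · rw [derivative_mul_ps, hmapd, derivative_genSer, hlog, map_mul, derivative_one_add_CX]
      linear_combination (-PowerSeries.map Polynomial.C (genSer c)) * hgeo2
    · simp [PowerSeries.coeff_mul, genSer, genFamF]
  have h := congrArg (PowerSeries.coeff (k+1)) key
  rw [mul_add, ← mul_assoc, mul_one, map_add, PowerSeries.coeff_succ_mul_X,
    mul_comm _ (PowerSeries.C _), PowerSeries.coeff_C_mul] at h
  simpa [genSer, eeF, hc] using h

lemma transl_eZF (k : ℤ) : transl (eZF k) =
    Polynomial.C (eZF k) + Polynomial.X * Polynomial.C (eZF (k-1)) := by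
  rcases lt_trichotomy k 0 with h | rfl | h
  · simp [eZF, not_le.mpr h, show ¬ (1 ≤ k) by omega]
  · simp [eZF, eeF, genFamF]
  · obtain ⟨j, rfl⟩ : ∃ j : ℕ, k = j + 1 := ⟨(k-1).toNat, by omega⟩
    have h1 : eZF ((j : ℤ) + 1) = eeF (j+1) := by
      rw [eZF, if_pos (by omega)]; congr 1
    have h2 : eZF ((j : ℤ) + 1 - 1) = eeF j := by
      rw [eZF, if_pos (by omega)]; congr 1; omega
    rw [h1, h2, transl_eeF_succ]

/-- Chain rule: with `T` for `transl`, `∂_u T P = ∑_n n u^{n-1} T (∂P/∂p_n)`,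
truncated modulo `u^N`. -/
lemma derivative_transl (N : ℕ) (P : LamF) :
    (Polynomial.X : Polynomial LamF) ^ N ∣ Polynomial.derivative (transl P) -
      ∑ i ∈ Finset.range N, ((i : Polynomial LamF) + 1) * Polynomial.X ^ i *
        transl (pderiv (Nat.succPNat i) P) := by
  induction P using MvPolynomial.induction_on with
  | C a =>
    have : transl (MvPolynomial.C a) = Polynomial.C (MvPolynomial.C a) := by
      simp [transl]
    simp [this]
  | add p q hp hq =>
    convert dvd_add hp hq using 1
    simp only [map_add, mul_add, Finset.sum_add_distrib]
    ring
  | mul_X p n hp =>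
    have hX : (Polynomial.X : Polynomial LamF) ^ N ∣ Polynomial.derivative (transl (X n)) -
      ∑ i ∈ Finset.range N, ((i : Polynomial LamF) + 1) * Polynomial.X ^ i *
        transl (pderiv (Nat.succPNat i) (X n)) := by
      have hd : Polynomial.derivative (transl (X n)) =
          (((n : ℕ) : Polynomial LamF)) * Polynomial.X ^ ((n : ℕ) - 1) := by
        have := transl_ppF n
        rw [ppF] at this
        rw [this, Polynomial.derivative_add, Polynomial.derivative_C, zero_add,
          Polynomial.derivative_X_pow]; simp
      have hn : ∀ i : ℕ, ((Nat.succPNat i) = n) ↔ i = (n : ℕ) - 1 := by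
        intro i
        rw [← PNat.coe_inj, Nat.succPNat_coe]
        have := n.pos
        omega
      rw [hd]
      by_cases h : (n : ℕ) - 1 < N
      · rw [Finset.sum_eq_single ((n : ℕ) - 1)]
        · rw [(hn _).mpr rfl, pderiv_X_self, map_one, mul_one]
          have : (((n : ℕ) - 1 : ℕ) : Polynomial LamF) + 1 = ((n : ℕ) : Polynomial LamF) := by
            have := n.pos
            exact_mod_cast congrArg (Nat.cast (R := Polynomial LamF))
              (show (n : ℕ) - 1 + 1 = n by omega)
          rw [this, sub_self]; exact dvd_zero _
        · intro b _ hb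
          rw [pderiv_X_of_ne (fun e => hb ((hn b).mp e.symm)), map_zero, mul_zero]
        · intro hh; exact absurd (Finset.mem_range.mpr h) hh
      · rw [Finset.sum_eq_zero, sub_zero]
        · exact dvd_mul_of_dvd_right (pow_dvd_pow _ (not_lt.mp h)) _
        · intro b hb
          rw [pderiv_X_of_ne, map_zero, mul_zero]
          intro e
          have := (hn b).mp e.symm
          exact h (this ▸ Finset.mem_range.mp hb)
    convert dvd_add (dvd_mul_of_dvd_left hp (transl (X n)))
      (dvd_mul_of_dvd_right hX (transl p)) using 1
    simp only [map_mul, Polynomial.derivative_mul, Derivation.leibniz, smul_eq_mul, map_add,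
      mul_add, Finset.sum_add_distrib, mul_sub, sub_mul, Finset.mul_sum, Finset.sum_mul]
    rw [add_comm (∑ i ∈ Finset.range N, _) (∑ i ∈ Finset.range N, _)]
    have e1 : ∀ i ∈ Finset.range N, ((i : Polynomial LamF) + 1) * Polynomial.X ^ i *
        (transl (X n) * transl (pderiv (Nat.succPNat i) p)) =
        ((i : Polynomial LamF) + 1) * Polynomial.X ^ i *
        transl (pderiv (Nat.succPNat i) p) * transl (X n) := fun i _ => by ring
    have e2 : ∀ i ∈ Finset.range N, ((i : Polynomial LamF) + 1) * Polynomial.X ^ i *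
        (transl p * transl (pderiv (Nat.succPNat i) (X n))) =
        transl p * (((i : Polynomial LamF) + 1) * Polynomial.X ^ i *
        transl (pderiv (Nat.succPNat i) (X n))) := fun i _ => by ring
    rw [Finset.sum_congr rfl e1, Finset.sum_congr rfl e2]
    ring

lemma coeff_transl_succ (k : ℕ) (P : LamF) :
    (transl P).coeff (k+1) * ((k : LamF) + 1) = ∑ i ∈ Finset.range (k+1), ((i : LamF) + 1) *
      (transl (pderiv (Nat.succPNat i) P)).coeff (k - i) := by
  have h := Polynomial.X_pow_dvd_iff.mp (derivative_transl (k+1) P) k (Nat.lt_succ_self k)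
  rw [Polynomial.coeff_sub, Polynomial.coeff_derivative, sub_eq_zero] at h
  rw [h, Polynomial.finsetSum_coeff]
  refine Finset.sum_congr rfl fun i hi => ?_
  have hik : i ≤ k := Nat.lt_succ_iff.mp (Finset.mem_range.mp hi)
  have : ((i : Polynomial LamF) + 1) = Polynomial.C ((i : LamF) + 1) := by simp
  rw [this, mul_assoc, Polynomial.coeff_C_mul, Polynomial.coeff_X_pow_mul', if_pos hik]

/-! ### The annihilation part of `X⁻` -/

/-- The operator `i·∂/∂p_i`. -/
def dOp (i : ℕ+) : Module.End Fq LamF := ((i : ℕ) : Fq) • (pderiv i).toLinearMap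

lemma dOp_comm (i j : ℕ+) : dOp i * dOp j = dOp j * dOp i := by
  have h : (pderiv i).toLinearMap * (pderiv j).toLinearMap =
      (pderiv j).toLinearMap * ((pderiv i).toLinearMap : Module.End Fq LamF) := by
    apply LinearMap.ext
    intro P
    have : ⁅(pderiv i : Derivation Fq LamF LamF), (pderiv j : Derivation Fq LamF LamF)⁆ = 0 := by
      apply MvPolynomial.derivation_ext
      intro k
      rw [Derivation.commutator_apply]
      simp only [pderiv_X]
      have hs : ∀ a b : ℕ+, pderiv a ((Pi.single b 1 : ℕ+ → LamF) k) = 0 := by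
        intro a b
        rcases eq_or_ne k b with rfl | h
        · rw [Pi.single_eq_same, pderiv_one]
        · rw [Pi.single_eq_of_ne h, map_zero]
      rw [hs, hs, sub_zero, Derivation.coe_zero, Pi.zero_apply]
    have := congrArg (fun D => D P) this
    simp only [Derivation.commutator_apply, Derivation.coe_zero, Pi.zero_apply] at this
    exact sub_eq_zero.mp this
  simp only [dOp, smul_mul_smul_comm, h, mul_comm]

/-- The commutative algebra generated by the operators `i·∂/∂p_i`. -/
abbrev dAlg : Subalgebra Fq (Module.End Fq LamF) := Algebra.adjoin Fq (Set.range dOp)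

instance dAlgComm : CommRing dAlg :=
  { (inferInstance : Ring dAlg) with
    mul_comm := (Algebra.isMulCommutative_adjoin Fq (s := Set.range dOp) (by
      rintro _ ⟨i, rfl⟩ _ ⟨j, rfl⟩; exact dOp_comm i j)).is_comm.comm }

/-- `i·∂/∂p_i` as an element of `dAlg`. -/
def dGen (i : ℕ+) : dAlg := ⟨dOp i, Algebra.subset_adjoin ⟨i, rfl⟩⟩

/-- The substitution `p_i ↦ i·∂/∂p_i`. -/
def dSub : LamF →ₐ[Fq] dAlg := MvPolynomial.aeval dGen

lemma monOpF_eq (α : ℕ+ →₀ ℕ) : monOpF α = (dSub (monomial α 1) : dAlg).1 := by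
  have h1 : dSub (monomial α 1) = ((α.support.sort (· ≤ ·)).map fun i => dGen i ^ α i).prod := by
    rw [dSub, aeval_monomial, map_one, one_mul, Finsupp.prod,
      ← List.prod_toFinset _ (Finset.sort_nodup _ _), Finset.sort_toFinset]
  rw [h1]
  change _ = dAlg.val _
  rw [map_list_prod, List.map_map]
  rfl

lemma DopF_eq (f P : LamF) : DopF f P = (dSub f : dAlg).1 P := by
  conv_rhs => rw [f.as_sum]
  change _ = (dAlg.val _) P
  rw [map_sum, map_sum, LinearMap.sum_apply, DopF]
  refine Finset.sum_congr rfl fun α _ => ?_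
  rw [monOpF_eq]
  have : monomial α (f.coeff α) = f.coeff α • (monomial α 1 : LamF) := by
    rw [smul_monomial, smul_eq_mul, mul_one]
  rw [this, map_smul, map_smul]
  rfl

/-- `h_j(∂)` extracts the coefficient of `u^j` from the translation: both sides satisfy the
recursion obtained from Newton's identity for `h_j`, respectively from the chain rule. -/
lemma DopF_hhF (j : ℕ) : ∀ P, DopF (hhF j) P = (transl P).coeff j := by
  induction j using Nat.strong_induction_on with
  | _ j ih =>
    intro P
    cases j with
    | zero =>
      have h0 : (Polynomial.constantCoeff : Polynomial LamF →+* LamF).comp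
          (transl : LamF →+* Polynomial LamF) = RingHom.id LamF := by
        apply MvPolynomial.ringHom_ext
        · intro r; simp [transl]
        · intro n
          have := transl_ppF n
          rw [ppF] at this
          have hn : ¬ 0 = (n : ℕ) := n.pos.ne
          simp [this, hn]
      have := congrArg (fun φ => φ P) h0
      simp only [RingHom.comp_apply, RingHom.id_apply] at this
      rw [DopF_eq, hhF, genFamF, map_one]
      exact this.symm
    | succ k =>
      have hk : ((k : LamF) + 1) ≠ 0 := by exact_mod_cast Nat.succ_ne_zero k
      apply mul_right_cancel₀ hk
      rw [coeff_transl_succ]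
      have h1 := congrArg (fun f => DopF f P) (genFamF_succ (fun _ => 1) k)
      simp only [one_smul, DopF_eq, map_mul, map_sum] at h1
      have h2 : (dSub (genFamF (fun _ => 1) (k+1)) * dSub ((k : LamF) + 1) : dAlg).1 P =
          (dSub (hhF (k+1)) : dAlg).1 P * ((k : LamF) + 1) := by
        have e : ((k : LamF) + 1) = algebraMap Fq LamF ((k : Fq) + 1) := by simp
        rw [e, AlgHom.commutes, mul_comm, ← Algebra.smul_def, mul_comm _ (algebraMap _ _ _),
          ← Algebra.smul_def]
        rfl
      rw [DopF_eq, ← h2, h1]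
      change (dAlg.val _) P = _
      rw [map_sum, LinearMap.sum_apply]
      refine Finset.sum_congr rfl fun i hi => ?_
      rw [← ih (k - i) (by omega), DopF_eq, mul_comm (dSub _)]
      change (dSub (hhF (k - i)) : dAlg).1 ((dSub (ppF i.succPNat) : dAlg).1 P) = _
      have h3 : (dSub (ppF i.succPNat) : dAlg).1 P = ((i : Fq) + 1) • pderiv i.succPNat P := by
        simp [dSub, ppF, dGen, dOp]
      rw [h3, map_smul, MvPolynomial.smul_eq_C_mul]
      simp

/-- The truncation bound in `Xm` is large enough to see every nonzero term. -/
lemma natDegree_transl (P : LamF) : (transl P).natDegree ≤ wboundF P := by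
  conv_lhs => rw [P.as_sum]
  rw [map_sum]
  apply Polynomial.natDegree_sum_le_of_forall_le
  intro α hα
  have h2 : (α.sum fun i k => (i : ℕ) * k) ≤ wboundF P :=
    Finset.le_sup (f := fun α : ℕ+ →₀ ℕ => α.sum fun i k => (i : ℕ) * k) hα
  refine le_trans ?_ h2
  rw [transl, aeval_monomial]
  refine Polynomial.natDegree_mul_le.trans ?_
  have : (algebraMap Fq (Polynomial LamF) (coeff α P)).natDegree = 0 := by
    rw [Polynomial.algebraMap_apply, Polynomial.natDegree_C]
  rw [this, zero_add, Finsupp.prod, Finsupp.sum]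
  refine (Polynomial.natDegree_prod_le _ _).trans (Finset.sum_le_sum fun i _ => ?_)
  refine Polynomial.natDegree_pow_le.trans ?_
  rw [mul_comm]
  refine Nat.mul_le_mul_right _ ?_
  refine (Polynomial.natDegree_add_le _ _).trans ?_
  simp

/-! ### The operators `B_k` -/

/-- The linear map `Λ[u] → Λ` sending `u^j` to `g j`. -/
def evalSeq (g : ℕ → LamF) : Polynomial LamF →ₗ[LamF] LamF where
  toFun f := f.sum fun j a => a * g j
  map_add' f f' := Polynomial.sum_add_index _ _ _ (by simp) (by intros; ring)
  map_smul' a f := by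
    rw [Polynomial.sum_smul_index _ _ _ (by simp), smul_eq_mul, Polynomial.sum, Polynomial.sum,
      RingHom.id_apply, Finset.mul_sum]
    simp [mul_assoc]

lemma evalSeq_monomial (g : ℕ → LamF) (j : ℕ) (a : LamF) :
    evalSeq g (Polynomial.monomial j a) = a * g j := by
  simp [evalSeq, Polynomial.sum_monomial_index]

lemma evalSeq_eq (g : ℕ → LamF) (f : Polynomial LamF) {N : ℕ} (h : f.natDegree < N) :
    evalSeq g f = ∑ j ∈ Finset.range N, f.coeff j * g j :=
  Polynomial.sum_over_range' f (f := fun j a => a * g j) (fun _ => zero_mul _) N h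

/-- The Bernstein-type operator `B_k = ∑_j (-1)^j e_{k+j} h_j^⊥`. -/
def bern (k : ℤ) : LamF →ₗ[Fq] LamF :=
  ((evalSeq fun j => (-1) ^ j * eZF (k + j)).restrictScalars Fq).comp transl.toLinearMap

lemma bern_apply (k : ℤ) (P : LamF) :
    bern k P = evalSeq (fun j => (-1) ^ j * eZF (k + j)) (transl P) := rfl

/-- The operator `∑_j H⁻_{k+j} h_j^⊥` on `Λ`, where `H⁻` stands for `HZm`; this is the action of
`X_n^-` on `Λ e^{mα}e^{iα/2}` for `k = 2m + i - n - 1`. -/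
def curr (k : ℤ) : LamF →ₗ[Fq] LamF :=
  ((evalSeq fun j => HZm (k + j)).restrictScalars Fq).comp transl.toLinearMap

lemma Xm_single (i n m : ℤ) (P : LamF) :
    Xm i n (Finsupp.single m P) = Finsupp.single (m-1) (curr (2*m + i - n - 1) P) := by
  rw [Xm, Finsupp.sum_single_index]
  · congr 1
    change _ = evalSeq _ (transl P)
    rw [evalSeq_eq _ _ (Nat.lt_succ_of_le (natDegree_transl P))]
    refine Finset.sum_congr rfl fun j _ => ?_
    rw [DopF_hhF, mul_comm]
    congr 2; ring
  · simp [DopF_hhF]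

lemma evalSeq_X_mul (k : ℤ) (f : Polynomial LamF) :
    evalSeq (fun j => (-1) ^ j * eZF (k + j)) (Polynomial.X * f) =
      - evalSeq (fun j => (-1) ^ j * eZF (k + 1 + j)) f := by
  induction f using Polynomial.induction_on' with
  | add p q hp hq => rw [mul_add, map_add, map_add, hp, hq]; ring
  | monomial n a =>
    rw [Polynomial.X_mul_monomial, evalSeq_monomial, evalSeq_monomial]
    push_cast
    rw [show k + 1 + (n : ℤ) = k + ((n : ℤ) + 1) by ring]
    ring

/-- `B_k ∘ e_c = e_c ∘ B_k - e_{c-1} ∘ B_{k+1}`. -/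
lemma bern_eZF_mul (k c : ℤ) (P : LamF) :
    bern k (eZF c * P) = eZF c * bern k P - eZF (c-1) * bern (k+1) P := by
  simp only [bern_apply, map_mul, transl_eZF, add_mul, map_add]
  rw [← Polynomial.smul_eq_C_mul, map_smul, mul_assoc, ← Polynomial.smul_eq_C_mul,
    evalSeq_X_mul, map_smul, smul_eq_mul, smul_eq_mul]
  ring

lemma neg_one_pow_mul_neg_pow {A : Type*} [CommRing A] (x : A) (n : ℕ) :
    (-1) ^ n * (-x) ^ n = x ^ n := by
  rw [← mul_pow]; simp

/-- `B_k` prepends a part to a dual Schur function. By `transl_eZF`, the translate of `s_{ρ'}` is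
a minor of a matrix with columns `C_c + u C_{c-1}`; the column operations reducing these to `C_c`
replace its first row `(1, 0, …, 0)` by `((-u)^c)_c`, and expanding along that row turns `(-u)^c`
into `e_{k+c}`. -/
lemma bern_schurEF {l : ℕ} (k : ℤ) (ρ : Fin l → ℤ) :
    bern k (schurEF ρ) = schurEF (Fin.cons k ρ : Fin (l+1) → ℤ) := by
  set M : Matrix (Fin l) (Fin (l+1)) LamF :=
    Matrix.of fun a c => eZF (ρ a - (a.1 : ℤ) - 1 + (c.1 : ℤ)) with hM
  set D : Matrix (Fin (l+1)) (Fin (l+1)) (Polynomial LamF) :=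
    Matrix.of fun a c => Fin.cases ((-Polynomial.X) ^ c.1) (fun a' => Polynomial.C (M a' c)) a
    with hD
  set D' : Matrix (Fin (l+1)) (Fin (l+1)) (Polynomial LamF) :=
    Matrix.of fun a c => Fin.cases (D a 0) (fun c' => D a c'.succ + Polynomial.X * D a c'.castSucc) c
    with hD'
  have h1 : D.det = D'.det := by
    apply Matrix.det_eq_of_forall_col_eq_smul_add_pred (fun _ => -Polynomial.X)
    · intro a; simp [hD']
    · intro a c; simp [hD']
  have h2 : transl (schurEF ρ) = D'.det := by
    rw [Matrix.det_succ_row_zero, Fin.sum_univ_succ, Finset.sum_eq_zero, add_zero]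
    · rw [schurEF]
      change (transl : LamF →+* Polynomial LamF) _ = _
      rw [RingHom.map_det]
      simp only [Fin.val_zero, pow_zero, one_mul, Fin.succAbove_zero]
      have : D' 0 0 = 1 := by simp [hD', hD]
      rw [this, one_mul]
      congr 1
      ext1 a c
      have := transl_eZF (ρ a - (a.1 : ℤ) + (c.1 : ℤ))
      simp only [RingHom.mapMatrix_apply, Matrix.map_apply, Matrix.of_apply, Matrix.submatrix_apply,
        hD', hD, hM, Fin.cases_succ]
      change transl _ = _
      rw [this]
      rw [show ρ a - (a.1 : ℤ) + (c.1 : ℤ) = ρ a - (a.1 : ℤ) - 1 + ((c.succ : Fin (l+1)).1 : ℤ) by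
          rw [Fin.val_succ]; push_cast; ring,
        show ρ a - (a.1 : ℤ) - 1 + ((c.succ : Fin (l+1)).1 : ℤ) - 1
            = ρ a - (a.1 : ℤ) - 1 + ((c.castSucc : Fin (l+1)).1 : ℤ) by
          rw [Fin.val_succ, Fin.val_castSucc]; push_cast; ring]
    · intro c _
      have : D' 0 c.succ = 0 := by simp [hD', hD, pow_succ]; ring
      rw [this]; ring
  rw [bern_apply, h2, ← h1, Matrix.det_succ_row_zero, map_sum, schurEF, Matrix.det_succ_row_zero]
  refine Finset.sum_congr rfl fun c _ => ?_
  have h3 : (D.submatrix Fin.succ c.succAbove).det =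
      Polynomial.C (M.submatrix id c.succAbove).det := by
    rw [RingHom.map_det]
    congr 1
  have h5 : (-1 : Polynomial LamF) ^ c.1 * D 0 c = Polynomial.monomial c.1 1 := by
    rw [← Polynomial.X_pow_eq_monomial]
    exact neg_one_pow_mul_neg_pow _ _
  rw [h3, h5, mul_comm, Polynomial.C_mul_monomial, evalSeq_monomial, mul_one, mul_comm]
  congr 1
  · simp
  · congr 1
    ext1 a b
    simp only [hM, Matrix.submatrix_apply, Matrix.of_apply, Fin.cons_succ, id]
    congr 1; rw [Fin.val_succ]; push_cast; ring

/-! ### `X⁻` in terms of the operators `B_k` -/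

lemma qq_ne_zero : qq ≠ 0 := RatFunc.X_ne_zero

lemma eZF_of_neg {c : ℤ} (h : c < 0) : eZF c = 0 := if_neg (not_le.mpr h)

lemma eZF_natCast (k : ℕ) : eZF k = eeF k := by simp [eZF]

lemma support_ee (K : ℤ) :
    (Function.support fun b : ℤ => qq ^ (2 * b) • (eZF b * eZF (K - b))) ⊆ Set.Icc 0 K := by
  intro b hb
  rw [Function.mem_support] at hb
  constructor
  · by_contra h
    exact hb (by rw [eZF_of_neg (not_le.mp h), zero_mul, smul_zero])
  · by_contra h
    exact hb (by rw [eZF_of_neg (c := K - b) (by omega), mul_zero, smul_zero])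

/-- `H⁻_K = (-1)^K ∑_b q^{2b} e_b e_{K-b}`. -/
lemma HZm_eq (K : ℤ) :
    HZm K = (-1 : Fq) ^ K • ∑ᶠ b : ℤ, qq ^ (2 * b) • (eZF b * eZF (K - b)) := by
  rcases lt_or_ge K 0 with h | h
  · rw [HZm, if_neg (not_le.mpr h), finsum_eq_zero_of_forall_eq_zero, smul_zero]
    intro b
    by_contra hb
    have := support_ee K hb
    rw [Set.mem_Icc] at this
    omega
  · lift K to ℕ using h with k
    rw [HZm, if_pos (by positivity), Int.toNat_natCast, HmF_eq, zpow_natCast,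
      Finset.Nat.sum_antidiagonal_eq_sum_range_succ_mk]
    congr 1
    rw [finsum_eq_sum_of_support_subset (s := (Finset.range (k+1)).map Nat.castEmbedding),
      Finset.sum_map]
    · refine Finset.sum_congr rfl fun b hb => ?_
      have hb' : b ≤ k := Nat.lt_succ_iff.mp (Finset.mem_range.mp hb)
      rw [Nat.castEmbedding_apply, ← Nat.cast_sub hb', eZF_natCast, eZF_natCast, ← pow_mul]
      norm_cast
    · refine (support_ee k).trans fun b hb => ?_
      obtain ⟨h0, h1⟩ := hb
      lift b to ℕ using h0
      simp only [Finset.coe_map, Set.mem_image, Finset.coe_range, Set.mem_Iio]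
      exact ⟨b, by omega, rfl⟩

lemma neg_one_zpow_add_nat (k : ℤ) (j : ℕ) : (-1 : Fq) ^ (k + j) = (-1) ^ k * (-1) ^ j := by
  rw [zpow_add₀ (by norm_num), zpow_natCast]

/-- `X⁻` in terms of the operators `B_k`. -/
lemma curr_eq (k : ℤ) (P : LamF) :
    curr k P = (-1 : Fq) ^ k • ∑ᶠ b : ℤ, qq ^ (2 * b) • (eZF b * bern (k - b) P) := by
  set N := (transl P).natDegree + 1
  have h1 : curr k P = ∑ j ∈ Finset.range N, (transl P).coeff j * HZm (k + j) :=
    evalSeq_eq _ _ (Nat.lt_succ_self _)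
  have h2 : ∀ b : ℤ, qq ^ (2 * b) • (eZF b * bern (k - b) P) =
      ∑ j ∈ Finset.range N, ((-1 : Fq) ^ j • (transl P).coeff j) *
        (qq ^ (2 * b) • (eZF b * eZF (k + j - b))) := by
    intro b
    rw [bern_apply, evalSeq_eq _ _ (Nat.lt_succ_self _), Finset.mul_sum, Finset.smul_sum]
    refine Finset.sum_congr rfl fun j _ => ?_
    rw [show k - b + (j : ℤ) = k + j - b by ring]
    simp only [MvPolynomial.smul_eq_C_mul, map_pow, map_neg, map_one]
    ring
  simp only [h2]
  rw [h1, finsum_sum_comm, Finset.smul_sum]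
  · refine Finset.sum_congr rfl fun j _ => ?_
    rw [← mul_finsum, HZm_eq, neg_one_zpow_add_nat, smul_mul_assoc, smul_smul, mul_smul_comm]
  · intro j _
    refine (Set.finite_Icc 0 (k + j : ℤ)).subset (subset_trans ?_ (support_ee (k+j)))
    intro b hb hb'
    exact hb (by simp only at hb' ⊢; rw [hb', mul_zero])

/-! ### Alternating dual Schur functions -/

lemma schurEF_cast {l l' : ℕ} (h : l' = l) (ρ : Fin l → ℤ) :
    schurEF (ρ ∘ Fin.cast h) = schurEF ρ := by
  subst h; rfl

/-- The dual Schur function of the juxtaposition of `(η_a + a)_a` and `μ`; the shift makes it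
alternating in `η`. -/
def altSchur {l r : ℕ} (μ : Fin l → ℤ) (η : Fin r → ℤ) : LamF :=
  schurEF (Fin.append (fun a : Fin r => η a + (a.1 : ℤ)) μ)

lemma altSchur_perm {l r : ℕ} (μ : Fin l → ℤ) (η : Fin r → ℤ) (σ : Equiv.Perm (Fin r)) :
    altSchur μ (η ∘ σ) = ((Equiv.Perm.sign σ : ℤ) : LamF) * altSchur μ η := by
  set τ : Equiv.Perm (Fin (r + l)) := finSumFinEquiv.permCongr (σ.sumCongr 1)
  have hτ : Equiv.Perm.sign τ = Equiv.Perm.sign σ := by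
    rw [Equiv.Perm.sign_permCongr, Equiv.Perm.sign_sumCongr, map_one, mul_one]
  rw [← hτ, altSchur, altSchur, schurEF, schurEF, ← Matrix.det_permute]
  congr 1
  ext1 a c
  simp only [Matrix.of_apply, Matrix.submatrix_apply, id]
  congr 1
  refine Fin.addCases (fun a => ?_) (fun a => ?_) a
  · have : τ (Fin.castAdd l a) = Fin.castAdd l (σ a) := by
      simp [τ, Equiv.permCongr_apply]
    rw [this, Fin.append_left, Fin.append_left]
    simp
  · have : τ (Fin.natAdd r a) = Fin.natAdd r a := by
      simp [τ, Equiv.permCongr_apply]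
    rw [this, Fin.append_right, Fin.append_right]

/-- A function of tuples that changes sign under a transposition vanishes on tuples with the two
corresponding entries equal. -/
lemma eq_zero_of_swap {r : ℕ} {f : (Fin r → ℤ) → LamF} {η : Fin r → ℤ} {a b : Fin r}
    (hab : a ≠ b) (h : η a = η b) (hf : f (η ∘ Equiv.swap a b) =
      ((Equiv.Perm.sign (Equiv.swap a b) : ℤ) : LamF) * f η) : f η = 0 := by
  have h2 : η ∘ Equiv.swap a b = η := by
    funext x
    simp only [Function.comp_apply, Equiv.swap_apply_def]
    split_ifs with h3 h4
    · rw [h3, h]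
    · rw [h4, h]
    · rfl
  rw [Equiv.Perm.sign_swap hab, h2] at hf
  push_cast at hf
  have h3 : (2 : LamF) * f η = 0 := by linear_combination hf
  exact (mul_eq_zero.mp h3).resolve_left two_ne_zero

lemma altSchur_eq_zero_of_eq {l r : ℕ} (μ : Fin l → ℤ) (η : Fin r → ℤ) {a b : Fin r}
    (hab : a ≠ b) (h : η a = η b) : altSchur μ η = 0 :=
  eq_zero_of_swap hab h (altSchur_perm μ η _)

lemma altSchur_eq_zero {l r : ℕ} (μ : Fin l → ℤ) (η : Fin r → ℤ) (a : Fin r)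
    (h : η a + (r + l : ℕ) ≤ 0) : altSchur μ η = 0 := by
  apply Matrix.det_eq_zero_of_row_eq_zero (Fin.castAdd l a)
  intro c
  rw [Matrix.of_apply, Fin.append_left]
  apply eZF_of_neg
  have := c.2
  rw [Fin.val_castAdd]
  omega

lemma bern_altSchur {l r : ℕ} (μ : Fin l → ℤ) (k : ℤ) (η : Fin r → ℤ) :
    bern k (altSchur μ η) =
      altSchur μ (Fin.cons k (fun a => η a - 1) : Fin (r+1) → ℤ) := by
  have : (fun a : Fin (r+1) => (Fin.cons k (fun a => η a - 1) : Fin (r+1) → ℤ) a + (a.1 : ℤ)) =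
      Fin.cons k (fun a : Fin r => η a + (a.1 : ℤ)) := by
    funext a
    refine Fin.cases ?_ (fun a => ?_) a
    · simp
    · simp
  rw [altSchur, altSchur, this, Fin.append_cons, schurEF_cast, bern_schurEF]

/-- Indicator function of `S` with integer values. -/
abbrev ind {r : ℕ} (S : Finset (Fin r)) (a : Fin r) : ℤ := if a ∈ S then 1 else 0

/-- The commutation of `B_k` with one `e_c`, iterated over a product: `S` records the factors whose
index drops by one. -/
lemma bern_prod_mul {r : ℕ} (c : Fin r → ℤ) (Q : LamF) (T : Finset (Fin r)) : ∀ k : ℤ,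
    bern k ((∏ a ∈ T, eZF (c a)) * Q) =
      ∑ S ∈ T.powerset, (-1 : LamF) ^ S.card *
        ((∏ a ∈ T, eZF (c a - ind S a)) * bern (k + S.card) Q) := by
  induction T using Finset.induction_on with
  | empty => intro k; simp
  | insert x T hx ih =>
    intro k
    rw [Finset.prod_insert hx, mul_assoc, bern_eZF_mul, ih, ih, Finset.sum_powerset_insert hx,
      sub_eq_add_neg, Finset.mul_sum, Finset.mul_sum, ← Finset.sum_neg_distrib]
    congr 1
    · refine Finset.sum_congr rfl fun S hS => ?_
      have hxS : x ∉ S := fun h => hx (Finset.mem_powerset.mp hS h)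
      rw [Finset.prod_insert hx, ind, if_neg hxS, sub_zero]
      ring
    · refine Finset.sum_congr rfl fun S hS => ?_
      have hxS : x ∉ S := fun h => hx (Finset.mem_powerset.mp hS h)
      have h1 : ∏ a ∈ T, eZF (c a - ind (insert x S) a) = ∏ a ∈ T, eZF (c a - ind S a) := by
        refine Finset.prod_congr rfl fun a ha => ?_
        have : a ≠ x := fun h => hx (h ▸ ha)
        simp [ind, this]
      have h2 : k + 1 + (S.card : ℤ) = k + ((S.card + 1 : ℕ) : ℤ) := by push_cast; ring
      rw [Finset.prod_insert hx, h1, Finset.card_insert_of_notMem hxS, ind,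
        if_pos (Finset.mem_insert_self _ _), h2]
      ring

/-! ### The multi-index sums `theta` -/

/-- The summand of `theta`. -/
def thTerm {l r : ℕ} (μ : Fin l → ℤ) (K : ℤ) (β c : Fin r → ℤ) : LamF :=
  qq ^ (2 * ∑ a, c a) • ((∏ a, eZF (c a)) * altSchur μ (fun a => K - c a + β a))

/-- The multi-index sum `∑_c q^{2|c|} ∏_a e_{c_a} · s_{(K - c_a + β_a + a)_a, μ}'` produced by
iterating `X⁻`. -/
def theta {l r : ℕ} (μ : Fin l → ℤ) (K : ℤ) (β : Fin r → ℤ) : LamF :=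
  ∑ᶠ c : Fin r → ℤ, thTerm μ K β c

lemma support_thTerm {l r : ℕ} (μ : Fin l → ℤ) (K : ℤ) (β : Fin r → ℤ) :
    Function.support (thTerm μ K β) ⊆ Set.Icc 0 (fun a => K + β a + (r + l : ℕ)) := by
  intro c hc
  rw [Function.mem_support, thTerm] at hc
  constructor
  · intro a
    by_contra h
    exact hc (by rw [Finset.prod_eq_zero (Finset.mem_univ a) (eZF_of_neg (not_le.mp h)),
      zero_mul, smul_zero])
  · intro a
    by_contra h
    simp only [not_le] at h
    exact hc (by rw [altSchur_eq_zero _ _ a (by omega), mul_zero, smul_zero])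

lemma hasFiniteSupport_thTerm {l r : ℕ} (μ : Fin l → ℤ) (K : ℤ) (β : Fin r → ℤ) :
    Function.HasFiniteSupport (thTerm μ K β) :=
  (Set.finite_Icc _ _).subset (support_thTerm μ K β)

lemma theta_perm {l r : ℕ} (μ : Fin l → ℤ) (K : ℤ) (β : Fin r → ℤ) (σ : Equiv.Perm (Fin r)) :
    theta μ K (β ∘ σ) = ((Equiv.Perm.sign σ : ℤ) : LamF) * theta μ K β := by
  rw [theta, theta, mul_finsum, ← finsum_comp_equiv (σ.arrowCongr (Equiv.refl ℤ)).symm]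
  refine finsum_congr fun c => ?_
  have h : (σ.arrowCongr (Equiv.refl ℤ)).symm c = c ∘ σ := by ext; simp
  rw [h, thTerm, thTerm, mul_smul_comm]
  simp only [Function.comp_apply]
  rw [Equiv.sum_comp σ c, Equiv.prod_comp σ (fun a => eZF (c a))]
  have := altSchur_perm μ (fun a => K - c a + β a) σ
  simp only [Function.comp_def] at this
  rw [this]
  congr 1; ring

lemma theta_eq_zero {l r : ℕ} (μ : Fin l → ℤ) (K : ℤ) (β : Fin r → ℤ) {a b : Fin r}
    (hab : a ≠ b) (h : β a = β b) : theta μ K β = 0 :=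
  eq_zero_of_swap hab h (theta_perm μ K β _)

/-- `(b, c) ↦ (b, c - 1_S)`. -/
def consSub {r : ℕ} (S : Finset (Fin r)) : ℤ × (Fin r → ℤ) ≃ (Fin (r+1) → ℤ) :=
  ((Equiv.refl ℤ).prodCongr (Equiv.subRight (ind S))).trans (Fin.consEquiv fun _ => ℤ)

lemma consSub_apply {r : ℕ} (S : Finset (Fin r)) (b : ℤ) (c : Fin r → ℤ) :
    consSub S (b, c) = Fin.cons b (fun a => c a - ind S a) := rfl

lemma bern_thTerm {l r : ℕ} (μ : Fin l → ℤ) (K b : ℤ) (β c : Fin r → ℤ) :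
    qq ^ (2 * b) • (eZF b * bern (K - b) (thTerm μ (K + 2) β c)) =
      ∑ S : Finset (Fin r), (-qq ^ 2) ^ S.card •
        thTerm μ K (Fin.cons (S.card : ℤ) fun a => β a + 1 - ind S a) (consSub S (b, c)) := by
  rw [thTerm, map_smul, bern_prod_mul, Finset.powerset_univ, mul_smul_comm, smul_smul,
    Finset.mul_sum _ _ (eZF b), Finset.smul_sum]
  refine Finset.sum_congr rfl fun S _ => ?_
  rw [consSub_apply, thTerm, bern_altSchur, Fin.prod_univ_succ, Fin.sum_univ_succ]
  simp only [Fin.cons_zero, Fin.cons_succ]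
  have h1 : (fun a : Fin (r+1) => K - (Fin.cons b (fun a => c a - ind S a) : Fin (r+1) → ℤ) a +
      (Fin.cons (S.card : ℤ) (fun a => β a + 1 - ind S a) : Fin (r+1) → ℤ) a) =
      Fin.cons (K - b + S.card) (fun a => K + 2 - c a + β a - 1) := by
    funext a
    refine Fin.cases ?_ (fun a => ?_) a
    · simp
    · simp only [Fin.cons_succ]; ring
  have h2 : ∑ a, ind S a = (S.card : ℤ) := by simp [ind]
  have h3 : (-qq ^ 2) ^ S.card * qq ^ (2 * (b + ∑ a, (c a - ind S a))) =
      qq ^ (2 * b) * qq ^ (2 * ∑ a, c a) * (-1) ^ S.card := by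
    rw [Finset.sum_sub_distrib, h2, neg_pow, ← pow_mul, ← zpow_natCast qq (2 * _), mul_assoc,
      ← zpow_add₀ qq_ne_zero, ← zpow_add₀ qq_ne_zero, mul_comm]
    congr 2
    push_cast; ring
  rw [h1, smul_smul, h3, mul_smul _ ((-1) ^ S.card)]
  congr 1
  rw [MvPolynomial.smul_eq_C_mul, map_pow, map_neg, map_one]
  ring

/-- The effect of one more application of `X⁻` (in the form of `curr_eq`) on `theta`. -/
lemma theta_step {l r : ℕ} (μ : Fin l → ℤ) (K : ℤ) (β : Fin r → ℤ) :
    ∑ᶠ b : ℤ, qq ^ (2 * b) • (eZF b * bern (K - b) (theta μ (K + 2) β)) =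
      ∑ S : Finset (Fin r), (-qq ^ 2) ^ S.card •
        theta μ K (Fin.cons (S.card : ℤ) fun a => β a + 1 - ind S a) := by
  have h1 : ∀ b : ℤ, qq ^ (2 * b) • (eZF b * bern (K - b) (theta μ (K + 2) β)) =
      ∑ᶠ c : Fin r → ℤ, ∑ S : Finset (Fin r), (-qq ^ 2) ^ S.card •
        thTerm μ K (Fin.cons (S.card : ℤ) fun a => β a + 1 - ind S a) (consSub S (b, c)) := by
    intro b
    have := (bern (K - b)).toAddMonoidHom.map_finsum (hasFiniteSupport_thTerm μ (K + 2) β)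
    simp only [LinearMap.toAddMonoidHom_coe] at this
    rw [theta, this, mul_finsum, smul_finsum]
    exact finsum_congr fun c => bern_thTerm μ K b β c
  have hfin : ∀ S : Finset (Fin r), Function.HasFiniteSupport fun p : ℤ × (Fin r → ℤ) =>
      (-qq ^ 2) ^ S.card •
        thTerm μ K (Fin.cons (S.card : ℤ) fun a => β a + 1 - ind S a) (consSub S p) := by
    intro S
    refine Set.Finite.subset (((hasFiniteSupport_thTerm μ K (Fin.cons (S.card : ℤ)
      fun a => β a + 1 - ind S a)).preimage (consSub S).injective.injOn)) ?_
    intro p hp hp'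
    exact hp (by simp only; rw [hp', smul_zero])
  rw [finsum_congr h1]
  have h2 := finsum_curry (fun p : ℤ × (Fin r → ℤ) => ∑ S : Finset (Fin r), (-qq ^ 2) ^ S.card •
        thTerm μ K (Fin.cons (S.card : ℤ) fun a => β a + 1 - ind S a) (consSub S p)) ?_
  · rw [← h2, finsum_sum_comm _ _ fun S _ => hfin S]
    refine Finset.sum_congr rfl fun S _ => ?_
    rw [theta, ← smul_finsum, finsum_comp_equiv (consSub S)]
  · refine Set.Finite.subset (Set.finite_iUnion hfin) ?_
    intro p hp
    obtain ⟨S, _, hS⟩ := Finset.exists_ne_zero_of_sum_ne_zero hp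
    exact Set.mem_iUnion.mpr ⟨S, hS⟩

/-! ### The staircase exponent -/

/-- The staircase exponent `(0, 1, …, r-1)`. -/
def rho (r : ℕ) : Fin r → ℤ := fun a => (a.1 : ℤ)

/-- The initial segment `{0, …, s-1}` of `Fin r`. -/
def seg {r : ℕ} (s : Fin (r+1)) : Finset (Fin r) := Finset.univ.filter fun a => a.1 < s.1

lemma card_seg {r : ℕ} (s : Fin (r+1)) : (seg s).card = s.1 := by
  rw [seg, Fin.card_filter_val_lt]
  have := s.2
  omega

/-- A set closed under predecessors is an initial segment. -/
lemma eq_seg {r : ℕ} (S : Finset (Fin r))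
    (h : ∀ (a : ℕ) (ha : a + 1 < r), (⟨a + 1, ha⟩ : Fin r) ∈ S → (⟨a, by omega⟩ : Fin r) ∈ S) :
    ∃ s, seg s = S := by
  have hd : ∀ (d : ℕ) (a b : Fin r), a.1 = b.1 + d → a ∈ S → b ∈ S := by
    intro d
    induction d with
    | zero =>
      intro a b hab ha
      have : a = b := Fin.ext (by omega)
      exact this ▸ ha
    | succ d ih =>
      intro a b hab ha
      refine ih ⟨b.1 + d, by have := a.2; omega⟩ b rfl (h _ (by have := a.2; omega) ?_)
      have : a = ⟨b.1 + d + 1, by have := a.2; omega⟩ := Fin.ext (by simp only; omega)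
      exact this ▸ ha
  have hcard : S.card < r + 1 := by
    have := S.card_le_univ
    rw [Fintype.card_fin] at this
    omega
  refine ⟨⟨S.card, hcard⟩, ?_⟩
  ext a
  rw [seg, Finset.mem_filter]
  simp only [Finset.mem_univ, true_and]
  constructor
  · intro ha
    by_contra haS
    have : S ⊆ Finset.Iio a := by
      intro b hb
      rw [Finset.mem_Iio]
      by_contra hba
      rw [not_lt] at hba
      exact haS (hd (b.1 - a.1) b a (by have : a.1 ≤ b.1 := hba; omega) hb)
    have := Finset.card_le_card this
    rw [Fin.card_Iio] at this
    omega
  · intro haS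
    have : Finset.Iic a ⊆ S := by
      intro b hb
      rw [Finset.mem_Iic] at hb
      exact hd (a.1 - b.1) a b (by have : b.1 ≤ a.1 := hb; omega) haS
    have := Finset.card_le_card this
    rw [Fin.card_Iic] at this
    omega

/-- The exponent attached to an initial segment is a cyclic rearrangement of the staircase. -/
lemma cons_seg {r : ℕ} (s : Fin (r+1)) :
    (Fin.cons ((seg s).card : ℤ) fun a => rho r a + 1 - ind (seg s) a : Fin (r+1) → ℤ) =
      rho (r+1) ∘ (s.cycleRange.symm) := by
  funext a
  refine Fin.cases ?_ (fun a => ?_) a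
  · rw [Fin.cons_zero, card_seg, Function.comp_apply, Fin.cycleRange_symm_zero, rho]
  · rw [Fin.cons_succ, Function.comp_apply, Fin.cycleRange_symm_succ, rho, rho]
    by_cases h : a.1 < s.1
    · rw [Fin.succAbove_of_castSucc_lt _ _ h, ind, if_pos (by simp [seg, h]), Fin.val_castSucc]
      ring
    · rw [Fin.succAbove_of_le_castSucc _ _ (not_lt.mp h), ind, if_neg (by simpa [seg] using h),
        Fin.val_succ]
      push_cast; ring

/-- For the staircase exponent only the initial segments `S` contribute to `theta_step`, and each
of them contributes a multiple of the same `theta`. -/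
lemma theta_rho_step {l r : ℕ} (μ : Fin l → ℤ) (K : ℤ) :
    ∑ᶠ b : ℤ, qq ^ (2 * b) • (eZF b * bern (K - b) (theta μ (K + 2) (rho r))) =
      (∑ s ∈ Finset.range (r + 1), (qq ^ 2) ^ s) • theta μ K (rho (r+1)) := by
  rw [theta_step, ← Fin.sum_univ_eq_sum_range (fun s => (qq ^ 2) ^ s), Finset.sum_smul]
  symm
  refine Finset.sum_of_injOn seg ?_ (fun _ _ => Finset.mem_coe.mpr (Finset.mem_univ _)) ?_ ?_
  · intro s _ s' _ h
    have := congrArg Finset.card h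
    rw [card_seg, card_seg] at this
    exact Fin.ext this
  · intro S _ hS
    have : ¬ ∀ (a : ℕ) (ha : a + 1 < r),
        (⟨a + 1, ha⟩ : Fin r) ∈ S → (⟨a, by omega⟩ : Fin r) ∈ S := by
      intro h
      obtain ⟨s, hs⟩ := eq_seg S h
      exact hS ⟨s, by simp, hs⟩
    push Not at this
    obtain ⟨a, ha, h1, h2⟩ := this
    rw [theta_eq_zero (a := Fin.succ ⟨a + 1, ha⟩) (b := Fin.succ ⟨a, by omega⟩), smul_zero]
    · simp
    · rw [Fin.cons_succ, Fin.cons_succ, ind, ind, if_pos h1, if_neg h2, rho, rho]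
      push_cast; ring
  · intro s _
    rw [cons_seg, theta_perm, Equiv.Perm.sign_symm, Fin.sign_cycleRange, card_seg, neg_pow,
      mul_comm, mul_smul]
    congr 1
    push_cast
    rw [MvPolynomial.smul_eq_C_mul, map_pow, map_neg, map_one, ← mul_assoc, ← mul_pow]
    simp

lemma theta_zero {l : ℕ} (μ : Fin l → ℤ) (K : ℤ) : theta μ K (rho 0) = schurEF μ := by
  rw [theta, finsum_unique, thTerm, altSchur]
  simp only [Finset.univ_eq_empty, Finset.sum_empty, Finset.prod_empty, mul_zero, zpow_zero,
    one_smul, one_mul]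
  rw [← schurEF_cast (Nat.zero_add l)]
  congr 1
  rw [← Fin.elim0_append]
  congr 1
  exact Subsingleton.elim _ _

/-! ### Iterating `X⁻` -/

/-- The scalar `∏_{k<r} (1 + q² + ⋯ + q^{2k})`. -/
def qprod (r : ℕ) : Fq := ∏ k ∈ Finset.range r, ∑ s ∈ Finset.range (k + 1), (qq ^ 2) ^ s

/-- The `r`-th power of `X_n^-` on a dual Schur function. The charge drops by one at each step, so
the exponent drops by two and the sign `(-1)^{n+1+i}` stays the same. -/
lemma iterate_Xm {l : ℕ} (μ : Fin l → ℤ) (n m i : ℤ) (r : ℕ) :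
    (Xm i n)^[r] (Finsupp.single m (schurEF μ)) =
      Finsupp.single (m - r) (((-1 : Fq) ^ ((r : ℤ) * (n + 1 + i)) * qprod r) •
        theta μ (2 * m + i - n - 1 - 2 * r + 2) (rho r)) := by
  induction r with
  | zero => simp [theta_zero, qprod]
  | succ r ih =>
    rw [Function.iterate_succ_apply', ih, Xm_single, map_smul, curr_eq]
    have hK : (2 * m + i - n - 1 - 2 * (r : ℤ) + 2) = (2 * (m - (r : ℤ)) + i - n - 1) + 2 := by
      ring
    rw [hK, theta_rho_step]
    have hK' : (2 * m + i - n - 1 - 2 * ((r + 1 : ℕ) : ℤ) + 2) = 2 * (m - (r : ℤ)) + i - n - 1 := by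
      push_cast; ring
    rw [hK', smul_smul, smul_smul, qprod, qprod, Finset.prod_range_succ]
    have hs : (-1 : Fq) ^ (2 * (m - (r : ℤ)) + i - n - 1) = (-1) ^ (n + 1 + i) := by
      rw [show 2 * (m - (r : ℤ)) + i - n - 1 = (n + 1 + i) + 2 * (m - r - n - 1) by ring,
        zpow_add₀ (by norm_num), zpow_mul]
      simp
    have hs' : (-1 : Fq) ^ (((r + 1 : ℕ) : ℤ) * (n + 1 + i)) =
        (-1) ^ ((r : ℤ) * (n + 1 + i)) * (-1) ^ (n + 1 + i) := by
      rw [← zpow_add₀ (by norm_num)]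
      congr 1; push_cast; ring
    rw [hs, hs']
    have hm : m - (r : ℤ) - 1 = m - ((r + 1 : ℕ) : ℤ) := by push_cast; ring
    rw [hm]
    congr 2
    ring

/-! ### The `q`-factorial -/

lemma qq_pow_ne_one {n : ℕ} (hn : n ≠ 0) : qq ^ n ≠ 1 := by
  intro h
  have h1 : algebraMap (Polynomial ℚ) (RatFunc ℚ) (Polynomial.X ^ n) =
      algebraMap (Polynomial ℚ) (RatFunc ℚ) 1 := by
    rw [map_pow, RatFunc.algebraMap_X, map_one]; exact h
  have h2 := congrArg Polynomial.natDegree (RatFunc.algebraMap_injective ℚ h1)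
  rw [Polynomial.natDegree_X_pow, Polynomial.natDegree_one] at h2
  exact hn h2

lemma qnum_eq (k : ℕ) : (qq ^ (k+1) - (qq⁻¹) ^ (k+1)) / (qq - qq⁻¹) =
    (qq ^ k)⁻¹ * ∑ s ∈ Finset.range (k + 1), (qq ^ 2) ^ s := by
  have h0 := qq_ne_zero
  have h2 : qq ^ 2 - 1 ≠ 0 := sub_ne_zero.mpr (qq_pow_ne_one two_ne_zero)
  have h3 : qq - qq⁻¹ ≠ 0 := by
    have : qq - qq⁻¹ = qq⁻¹ * (qq ^ 2 - 1) := by field_simp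
    rw [this]
    exact mul_ne_zero (inv_ne_zero h0) h2
  have hg := geom_sum_mul (qq ^ 2) (k + 1)
  rw [div_eq_iff h3]
  have h4 : qq - qq⁻¹ = qq⁻¹ * (qq ^ 2 - 1) := by field_simp
  rw [h4]
  calc qq ^ (k+1) - (qq⁻¹) ^ (k+1) = (qq ^ k)⁻¹ * qq⁻¹ * ((qq ^ 2) ^ (k + 1) - 1) := by
        rw [inv_pow]; field_simp; ring
    _ = _ := by rw [← hg]; ring

lemma qfact_ne_zero (r : ℕ) : qfact r ≠ 0 := by
  have h0 := qq_ne_zero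
  refine Finset.prod_ne_zero_iff.mpr fun k _ => ?_
  rw [qnum_eq]
  refine mul_ne_zero (inv_ne_zero (pow_ne_zero _ h0)) fun h => ?_
  have hg := geom_sum_mul (qq ^ 2) (k + 1)
  rw [h, zero_mul, ← pow_mul] at hg
  exact qq_pow_ne_one (by omega) (sub_eq_zero.mp hg.symm)

lemma qprod_eq (r : ℕ) : qprod r = qq ^ ((r : ℤ) * ((r : ℤ) - 1) / 2) * qfact r := by
  induction r with
  | zero => simp [qprod, qfact]
  | succ r ih =>
    rw [qprod, qfact, Finset.prod_range_succ, Finset.prod_range_succ, ← qprod, ← qfact, ih, qnum_eq]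
    have h : (((r + 1 : ℕ) : ℤ) * (((r + 1 : ℕ) : ℤ) - 1) / 2) =
        (r : ℤ) * ((r : ℤ) - 1) / 2 + r := by
      rw [← Int.add_mul_ediv_right _ _ (by norm_num : (2 : ℤ) ≠ 0)]
      congr 1; push_cast; ring
    rw [h, zpow_add₀ qq_ne_zero, zpow_natCast]
    have := pow_ne_zero r qq_ne_zero
    field_simp

/-! ### Regrouping by partitions -/

/-- Weakly decreasing `r`-tuples, i.e. partitions with at most `r` parts. -/
abbrev Par (r : ℕ) : Type := {lam : Fin r → ℕ // Antitone lam}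

/-- `λ - ρ`. -/
def Par.shift {r : ℕ} (lam : Par r) (a : Fin r) : ℤ := (lam.1 a : ℤ) - (a.1 : ℤ)

lemma Par.strictAnti_shift {r : ℕ} (lam : Par r) : StrictAnti lam.shift := by
  intro a b hab
  have h1 : lam.1 b ≤ lam.1 a := lam.2 hab.le
  have h2 : a.1 < b.1 := hab
  rw [shift, shift]
  omega

/-- The exponents `c = σ(λ - ρ) + ρ` occurring in the expansion of `s_{λ'}` as a determinant. -/
def detExp {r : ℕ} (p : Par r × Equiv.Perm (Fin r)) (a : Fin r) : ℤ :=
  p.1.shift (p.2 a) + (a.1 : ℤ)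

lemma detExp_injective {r : ℕ} : Function.Injective (detExp (r := r)) := by
  rintro ⟨lam, σ⟩ ⟨lam', σ'⟩ h
  have h1 : lam.shift ∘ σ = lam'.shift ∘ σ' := by
    funext a
    have := congrFun h a
    simp only [detExp, add_left_inj] at this
    exact this
  have h2 : lam.shift = lam'.shift := by
    rw [← StrictAnti.range_inj lam.strictAnti_shift lam'.strictAnti_shift,
      ← σ.surjective.range_comp lam.shift, h1, σ'.surjective.range_comp]
  have h3 : lam = lam' := by
    apply Subtype.ext
    funext a
    have := congrFun h2 a
    rw [Par.shift, Par.shift] at this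
    omega
  subst h3
  have h4 : σ = σ' := Equiv.ext fun a => lam.strictAnti_shift.injective (congrFun h1 a)
  rw [h4]

/-- Sorting `c - ρ` into decreasing order yields `λ - ρ`; the last part of `λ` is
`c_x + (r - 1 - x)` for some `x`, hence nonnegative. -/
lemma mem_range_detExp {r : ℕ} (c : Fin r → ℤ) (h0 : ∀ a, 0 ≤ c a)
    (hinj : Function.Injective fun a => c a - (a.1 : ℤ)) : c ∈ Set.range (detExp (r := r)) := by
  cases r with
  | zero => exact ⟨(⟨fun _ => 0, fun _ _ _ => le_rfl⟩, 1), Subsingleton.elim _ _⟩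
  | succ r =>
    set d : Fin (r+1) → ℤ := fun a => -(c a - (a.1 : ℤ)) with hd
    set τ := Tuple.sort d
    have hmono : StrictMono (d ∘ τ) := (Tuple.monotone_sort d).strictMono_of_injective
      ((neg_injective.comp hinj).comp τ.injective)
    set L : Fin (r+1) → ℤ := fun b => (b.1 : ℤ) - d (τ b) with hL
    have hLanti : Antitone L := by
      rw [Fin.antitone_iff_succ_le]
      intro b
      have : (d ∘ τ) b.castSucc < (d ∘ τ) b.succ := hmono b.castSucc_lt_succ
      simp only [Function.comp_apply] at this
      simp only [hL, Fin.val_succ, Fin.val_castSucc]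
      push_cast
      omega
    have hL0 : ∀ b, 0 ≤ L b := by
      intro b
      refine le_trans ?_ (hLanti (Fin.le_last b))
      have h1 := h0 (τ (Fin.last r))
      have h2 := (τ (Fin.last r)).2
      simp only [hL, hd, Fin.val_last]
      omega
    refine ⟨(⟨fun b => (L b).toNat, fun a b hab => Int.toNat_le_toNat (hLanti hab)⟩, τ.symm), ?_⟩
    funext a
    simp only [detExp, Par.shift]
    rw [Int.toNat_of_nonneg (hL0 _)]
    simp only [hL, hd, Equiv.apply_symm_apply]
    ring

lemma support_subset_detExp {l r : ℕ} (μ : Fin l → ℤ) (K : ℤ) :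
    Function.support (thTerm μ K (rho r)) ⊆ Set.range (detExp (r := r)) := by
  intro c hc
  refine mem_range_detExp c (fun a => (support_thTerm μ K _ hc).1 a) ?_
  intro a b hab
  by_contra hne
  simp only at hab
  apply hc
  rw [thTerm, altSchur_eq_zero_of_eq μ _ hne, mul_zero, smul_zero]
  simp only [rho]
  omega

/-- The terms of `theta` indexed by one partition resum to the determinant `s_{λ'}`. -/
lemma sum_detExp {l r : ℕ} (μ : Fin l → ℤ) (K : ℤ) (lam : Par r) :
    ∑ σ : Equiv.Perm (Fin r), thTerm μ K (rho r) (detExp (lam, σ)) =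
      qq ^ (2 * ((∑ k, lam.1 k : ℕ) : ℤ)) • (schurEF (fun k => (lam.1 k : ℤ)) *
        altSchur μ (fun a => K - lam.shift a)) := by
  rw [schurEF, Matrix.det_apply, Finset.sum_mul, Finset.smul_sum]
  refine Finset.sum_congr rfl fun σ _ => ?_
  have h1 : ∑ a, detExp (lam, σ) a = ((∑ k, lam.1 k : ℕ) : ℤ) := by
    simp only [detExp, Finset.sum_add_distrib]
    rw [Equiv.sum_comp σ lam.shift]
    simp only [Par.shift, Finset.sum_sub_distrib]
    push_cast
    ring
  have h2 : (fun a => K - detExp (lam, σ) a + rho r a) = (fun a => K - lam.shift a) ∘ σ := by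
    funext a
    simp only [detExp, rho, Function.comp_apply]
    ring
  rw [thTerm, h1, h2, altSchur_perm]
  congr 1
  rw [Units.smul_def, zsmul_eq_mul]
  have h3 : ∏ a, eZF (detExp (lam, σ) a) = ∏ i, (Matrix.of fun i j : Fin r =>
      eZF ((lam.1 i : ℤ) - (i.1 : ℤ) + (j.1 : ℤ))) (σ i) i := rfl
  rw [h3]
  ring

/-- `theta` at the staircase, grouped by partitions: the summands are supported on the exponents
`detExp`, because `altSchur` is alternating. -/
lemma theta_rho {l r : ℕ} (μ : Fin l → ℤ) (K : ℤ) :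
    theta μ K (rho r) = ∑ᶠ (lam : Fin r → ℕ) (_ : Antitone lam),
      qq ^ (2 * ((∑ k, lam k : ℕ) : ℤ)) • (schurEF (fun k => (lam k : ℤ)) *
        schurEF (Fin.append (fun k : Fin r => K - (lam k : ℤ) + 2 * (k.1 : ℤ)) μ)) := by
  have hfin : Function.HasFiniteSupport fun p => thTerm μ K (rho r) (detExp p) :=
    (hasFiniteSupport_thTerm μ K (rho r)).preimage detExp_injective.injOn
  have h1 : theta μ K (rho r) = ∑ᶠ p, thTerm μ K (rho r) (detExp p) := by
    rw [← finsum_mem_range detExp_injective, theta, ← finsum_mem_univ]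
    apply finsum_mem_inter_support_eq'
    intro c hc
    simp only [Set.mem_univ, true_iff]
    exact support_subset_detExp μ K hc
  rw [h1, finsum_curry _ hfin, ← finsum_subtype_eq_finsum_cond]
  refine finsum_congr fun lam => ?_
  rw [finsum_eq_sum_of_fintype, sum_detExp, altSchur]
  have h2 : (fun a : Fin r => K - lam.shift a + (a.1 : ℤ)) =
      fun k : Fin r => K - (lam.1 k : ℤ) + 2 * (k.1 : ℤ) := by
    funext a
    rw [Par.shift]; ring
  rw [h2]

/-- divided powers of `X_n^−` on the dual Schur basis.  For `r ≥ 1`,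
`n, m ∈ ℤ`, `i ∈ {0,1}` and a partition `μ = (μ₁,…,μ_l)`:
`X_n^{−(r)} (s_{μ'} e^{mα}e^{iα/2})
  = (−1)^{r(n+1+i)} q^{r(r−1)/2} ∑_λ q^{2|λ|} · s_{λ'} · s_{(ν(λ),μ)'} · e^{(m−r)α}e^{iα/2}`,
the sum over partitions `λ` with at most `r` parts (weakly decreasing tuples in `ℕ^r`;
all but finitely many summands vanish), where
`ν(λ)_k := −λ_k − 2(r−k) − (n+1−2m−i)` (`k = 1,…,r`), and `s_{ρ'} = det (e_{ρ_a−a+b})`. -/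
theorem divided_power_Xminus_on_dual_schur (r : ℕ) (hr : 1 ≤ r) (n m i : ℤ)
    (hi : i = 0 ∨ i = 1) (l : ℕ) (mu : Fin l → ℕ) (hmu : Antitone mu) :
    divpow (Xm i n) r (Finsupp.single m (schurEF fun k => (mu k : ℤ)))
      = Finsupp.single (m - r)
          (((-1 : Fq)) ^ ((r : ℤ) * (n + 1 + i)) •
            qq ^ ((r : ℤ) * ((r : ℤ) - 1) / 2) •
              ∑ᶠ (lam : Fin r → ℕ) (_ : Antitone lam),
                qq ^ (2 * ((∑ k, lam k : ℕ) : ℤ)) •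
                  (schurEF (fun k => (lam k : ℤ)) *
                    schurEF (Fin.append
                      (fun k : Fin r => -(lam k : ℤ) - 2*((r : ℤ) - 1 - (k.1 : ℤ))
                        - (n + 1 - 2*m - i))
                      (fun k => (mu k : ℤ))))) := by
  rw [divpow, iterate_Xm, Finsupp.smul_single, smul_smul, smul_smul]
  congr 2
  · rw [qprod_eq]
    have := qfact_ne_zero r
    field_simp
  · rw [theta_rho]
    refine finsum_congr fun lam => finsum_congr fun _ => ?_
    congr 4
    funext k
    ring
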